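/- arXiv:1411.0659 — 2 statements merged into one kernel-verified Lean document; each statement's English description precedes it below -/
import Mathlib

section
/- Let n, m be natural numbers and let H be a pairwise independent random hash function from {0,1}^n to {0,1}^m on a probability space (Ω, P). Let y be a real number with 0 < y < 1, set G = 4/y² and a = (1 − y)·G. Let S be a finite subset of {0,1}^n such that |S| ≥ G·2^m. Let Z(ω) be the number of elements w ∈ S with H(ω)(w) = 0^m. Then P[Z ≥ a] ≥ 3/4. -/
open MeasureTheory
open scoped ENNReal ProbabilityTheory

/-!
The number of elements of `S` hashed to a given value `v` is a sum of indicators of pairwise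
independent events of probability `1 / |β|`. Off-diagonal covariances vanish, so its variance is
at most its mean `|S| / |β| ≥ G`, and Chebyshev's inequality bounds the probability of a relative
deviation `y` below the mean by `1 / (y² G)`; the choice `G = 1 / (δ y²)` makes this `δ`.
-/

section Concentration

variable {Ω ι : Type*} [MeasurableSpace Ω] {μ : Measure Ω}

theorem one_sub_le_measureReal_of_variance_le_integral [IsProbabilityMeasure μ] {X : Ω → ℝ}
    (hX : MemLp X 2 μ) (hvar : Var[X; μ] ≤ μ[X]) {y G : ℝ} (hy0 : 0 < y) (hy1 : y ≤ 1)
    (hG0 : 0 < G) (hG : G ≤ μ[X]) :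
    1 - 1 / (y ^ 2 * G) ≤ μ.real {ω | (1 - y) * G ≤ X ω} := by
  have hmean : 0 < μ[X] := hG0.trans_le hG
  have hcheb : μ.real {ω | y * μ[X] ≤ |X ω - μ[X]|} ≤ 1 / (y ^ 2 * G) :=
    calc μ.real {ω | y * μ[X] ≤ |X ω - μ[X]|}
      _ ≤ Var[X; μ] / (y * μ[X]) ^ 2 :=
        ENNReal.toReal_le_of_le_ofReal
          (div_nonneg (ProbabilityTheory.variance_nonneg X μ) (sq_nonneg _))
          (ProbabilityTheory.meas_ge_le_variance_div_sq hX (mul_pos hy0 hmean))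
      _ ≤ μ[X] / (y * μ[X]) ^ 2 := by gcongr
      _ = 1 / (y ^ 2 * μ[X]) := by field_simp
      _ ≤ 1 / (y ^ 2 * G) := by gcongr
  have hcover : Set.univ ⊆ {ω | (1 - y) * G ≤ X ω} ∪ {ω | y * μ[X] ≤ |X ω - μ[X]|} := by
    intro ω _
    refine or_iff_not_imp_left.mpr fun hω => ?_
    have hthreshold : (1 - y) * G ≤ (1 - y) * μ[X] :=
      mul_le_mul_of_nonneg_left hG (sub_nonneg.mpr hy1)
    have hlow : X ω < (1 - y) * G := not_le.mp hω
    change y * μ[X] ≤ |X ω - μ[X]|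
    linarith [neg_abs_le (X ω - μ[X])]
  have hunion := (measureReal_mono (μ := μ) hcover).trans (measureReal_union_le _ _)
  rw [probReal_univ] at hunion
  linarith

theorem memLp_two_indicator_one [IsFiniteMeasure μ] {A : Set Ω} (hA : MeasurableSet A) :
    MemLp (A.indicator (1 : Ω → ℝ)) 2 μ :=
  memLp_indicator_const 2 hA 1 (Or.inr (measure_ne_top μ A))

theorem covariance_indicator_one [IsProbabilityMeasure μ] {A B : Set Ω} (hA : MeasurableSet A)
    (hB : MeasurableSet B) :
    cov[A.indicator (1 : Ω → ℝ), B.indicator 1; μ] = μ.real (A ∩ B) - μ.real A * μ.real B := by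
  rw [ProbabilityTheory.covariance_eq_sub (memLp_two_indicator_one hA)
      (memLp_two_indicator_one hB), ← Set.inter_indicator_one,
    integral_indicator_one (hA.inter hB), integral_indicator_one hA, integral_indicator_one hB]

theorem integral_sum_indicator_one [IsFiniteMeasure μ] {A : ι → Set Ω} {s : Finset ι}
    (hA : ∀ i ∈ s, MeasurableSet (A i)) :
    μ[∑ i ∈ s, (A i).indicator (1 : Ω → ℝ)] = ∑ i ∈ s, μ.real (A i) := by
  simp only [Finset.sum_apply]
  rw [integral_finsetSum s fun i hi => (memLp_two_indicator_one (hA i hi)).integrable one_le_two]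
  exact Finset.sum_congr rfl fun i hi => integral_indicator_one (hA i hi)

theorem variance_sum_indicator_one_le [IsProbabilityMeasure μ] {A : ι → Set Ω} {s : Finset ι}
    (hA : ∀ i ∈ s, MeasurableSet (A i))
    (hcor : (s : Set ι).Pairwise fun i j => μ.real (A i ∩ A j) ≤ μ.real (A i) * μ.real (A j)) :
    Var[∑ i ∈ s, (A i).indicator (1 : Ω → ℝ); μ] ≤ ∑ i ∈ s, μ.real (A i) := by
  classical
  have hcov (i) (hi : i ∈ s) (j) (hj : j ∈ s) :
      cov[(A i).indicator (1 : Ω → ℝ), (A j).indicator 1; μ] ≤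
        if i = j then μ.real (A i) else 0 := by
    rw [covariance_indicator_one (hA i hi) (hA j hj)]
    split_ifs with hij
    · subst hij
      rw [Set.inter_self]
      exact sub_le_self _ (mul_self_nonneg _)
    · exact sub_nonpos.mpr (hcor hi hj hij)
  calc Var[∑ i ∈ s, (A i).indicator (1 : Ω → ℝ); μ]
    _ = ∑ i ∈ s, ∑ j ∈ s, cov[(A i).indicator (1 : Ω → ℝ), (A j).indicator 1; μ] :=
      ProbabilityTheory.variance_sum' fun i hi => memLp_two_indicator_one (hA i hi)
    _ ≤ ∑ i ∈ s, ∑ j ∈ s, if i = j then μ.real (A i) else 0 :=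
      Finset.sum_le_sum fun i hi => Finset.sum_le_sum fun j hj => hcov i hi j hj
    _ = ∑ i ∈ s, μ.real (A i) :=
      Finset.sum_congr rfl fun i hi => by rw [Finset.sum_ite_eq, if_pos hi]

theorem one_sub_le_measureReal_le_sum_indicator_one [IsProbabilityMeasure μ] {A : ι → Set Ω}
    {s : Finset ι} (hA : ∀ i ∈ s, MeasurableSet (A i))
    (hcor : (s : Set ι).Pairwise fun i j => μ.real (A i ∩ A j) ≤ μ.real (A i) * μ.real (A j))
    {y G : ℝ} (hy0 : 0 < y) (hy1 : y ≤ 1) (hG0 : 0 < G) (hG : G ≤ ∑ i ∈ s, μ.real (A i)) :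
    1 - 1 / (y ^ 2 * G) ≤ μ.real {ω | (1 - y) * G ≤ (∑ i ∈ s, (A i).indicator 1) ω} := by
  have hmean := integral_sum_indicator_one (μ := μ) hA
  exact one_sub_le_measureReal_of_variance_le_integral
    (memLp_finsetSum' s fun i hi => memLp_two_indicator_one (hA i hi))
    (hmean ▸ variance_sum_indicator_one_le hA hcor) hy0 hy1 hG0 (hmean ▸ hG)

end Concentration

theorem measureReal_eq_card_mul_of_forall_inter_preimage {Ω β : Type*} [MeasurableSpace Ω]
    {μ : Measure Ω} [IsFiniteMeasure μ] [Fintype β] [MeasurableSpace β]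
    [MeasurableSingletonClass β] {Y : Ω → β} (hY : Measurable Y) {A : Set Ω} {c : ℝ}
    (hA : ∀ v, μ.real (A ∩ Y ⁻¹' {v}) = c) :
    μ.real A = Fintype.card β * c := by
  have hfiber (v : β) : MeasurableSet (Y ⁻¹' {v}) := hY (measurableSet_singleton v)
  calc μ.real A
    _ = (μ.restrict A).real (Y ⁻¹' ↑(Finset.univ : Finset β)) := by simp
    _ = ∑ v, (μ.restrict A).real (Y ⁻¹' {v}) :=
      (sum_measureReal_preimage_singleton Finset.univ fun v _ => hfiber v).symm
    _ = ∑ _v : β, c := Finset.sum_congr rfl fun v _ => by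
      rw [measureReal_restrict_apply (hfiber v), Set.inter_comm, hA v]
    _ = Fintype.card β * c := by simp

/-- A pairwise independent random hash function with finite range: the values at any two distinct
points are jointly uniform on `β × β`. That each value is uniform on its own is not a field; it
follows as soon as `α` has two points. -/
structure IsPairwiseIndepHash {Ω α β : Type*} [MeasurableSpace Ω] [MeasurableSpace β] [Fintype β]
    (H : Ω → α → β) (μ : Measure Ω) : Prop where
  measurable_eval : ∀ w, Measurable fun ω => H ω w
  measureReal_pair : ∀ w w', w ≠ w' → ∀ v v',
    μ.real {ω | H ω w = v ∧ H ω w' = v'} = ((Fintype.card β : ℝ) ^ 2)⁻¹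

section PairwiseIndepHash

variable {Ω α β : Type*} [MeasurableSpace Ω] {μ : Measure Ω} [Fintype β]
  [MeasurableSpace β] [MeasurableSingletonClass β] {H : Ω → α → β}

theorem IsPairwiseIndepHash.measureReal_eval_eq [IsFiniteMeasure μ] [Nontrivial α]
    (hH : IsPairwiseIndepHash H μ) (w : α) (v : β) :
    μ.real {ω | H ω w = v} = (Fintype.card β : ℝ)⁻¹ := by
  obtain ⟨w', hne⟩ := exists_ne w
  have : Nonempty β := ⟨v⟩
  calc μ.real {ω | H ω w = v}
    _ = Fintype.card β * ((Fintype.card β : ℝ) ^ 2)⁻¹ :=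
      measureReal_eq_card_mul_of_forall_inter_preimage (hH.measurable_eval w')
        (hH.measureReal_pair w w' hne.symm v)
    _ = (Fintype.card β : ℝ)⁻¹ := by field_simp

theorem IsPairwiseIndepHash.one_sub_le_measureReal_le_card_filter [IsProbabilityMeasure μ]
    [Nontrivial α] [DecidableEq β] (hH : IsPairwiseIndepHash H μ) (v : β) {y G : ℝ}
    (hy0 : 0 < y) (hy1 : y ≤ 1) (hG0 : 0 < G) {S : Finset α} (hS : G * Fintype.card β ≤ S.card) :
    1 - 1 / (y ^ 2 * G) ≤
      μ.real {ω | (1 - y) * G ≤ ((S.filter fun w => H ω w = v).card : ℝ)} := by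
  have hβ : (0 : ℝ) < Fintype.card β := by exact_mod_cast Fintype.card_pos_iff.mpr ⟨v⟩
  let A : α → Set Ω := fun w => {ω | H ω w = v}
  have hA (w : α) : MeasurableSet (A w) := hH.measurable_eval w (measurableSet_singleton v)
  have hprob (w : α) : μ.real (A w) = (Fintype.card β : ℝ)⁻¹ := hH.measureReal_eval_eq w v
  have hcor : (S : Set α).Pairwise fun w w' =>
      μ.real (A w ∩ A w') ≤ μ.real (A w) * μ.real (A w') := by
    intro w _ w' _ hne
    simp only [hprob, ← sq, inv_pow]
    exact (hH.measureReal_pair w w' hne v v).le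
  have hmean : G ≤ ∑ w ∈ S, μ.real (A w) := by
    simp only [hprob, Finset.sum_const, nsmul_eq_mul]
    exact (le_mul_inv_iff₀ hβ).mpr hS
  have hcount (ω : Ω) : (∑ w ∈ S, (A w).indicator (1 : Ω → ℝ)) ω =
      (S.filter fun w => H ω w = v).card := by
    simp [A, Set.indicator_apply]
  simpa only [hcount] using one_sub_le_measureReal_le_sum_indicator_one
    (fun w _ => hA w) hcor hy0 hy1 hG0 hmean

theorem estimate_yes_general [IsProbabilityMeasure μ] [DecidableEq β]
    (hH : IsPairwiseIndepHash H μ) (v : β) {y δ G : ℝ} (hy0 : 0 < y) (hy1 : y ≤ 1)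
    (hδ0 : 0 < δ) (hδ1 : δ < 1) (hG : G = 1 / (δ * y ^ 2)) {S : Finset α}
    (hS : G * Fintype.card β ≤ S.card) :
    ENNReal.ofReal (1 - δ) ≤ μ {ω | (1 - y) * G ≤ ((S.filter fun w => H ω w = v).card : ℝ)} := by
  have hG1 : 1 < G := by
    rw [hG, one_lt_div (by positivity)]
    exact mul_lt_one_of_nonneg_of_lt_one_left hδ0.le hδ1 (pow_le_one₀ hy0.le hy1)
  have hβ : (1 : ℝ) ≤ Fintype.card β := by exact_mod_cast Fintype.card_pos_iff.mpr ⟨v⟩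
  have hcard : 1 < S.card := by
    exact_mod_cast (one_lt_mul_of_lt_of_le hG1 hβ).trans_le hS
  have : Nontrivial α :=
    Set.nontrivial_of_nontrivial (Finset.one_lt_card_iff_nontrivial.mp hcard)
  have hδ : 1 / (y ^ 2 * G) = δ := by
    rw [hG]
    field_simp
  refine ENNReal.ofReal_le_of_le_toReal ?_
  exact hδ ▸ hH.one_sub_le_measureReal_le_card_filter v hy0 hy1 (zero_lt_one.trans hG1) hS

end PairwiseIndepHash

/-- Estimate oracle, dense case: if `|S| ≥ G · 2^m` with `G = 4/y²` and `a = (1−y)·G`,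
then the number `Z` of elements of `S` hashed to `0^m` by a pairwise independent random
hash function is at least `a` with probability at least `3/4`. -/
theorem estimate_yes {Ω : Type*} [MeasureSpace Ω] [IsProbabilityMeasure (ℙ : Measure Ω)]
    (n m : ℕ) (H : Ω → (Fin n → Bool) → (Fin m → Bool)) (hH : Measurable H)
    (hpair : ∀ w w' : Fin n → Bool, w ≠ w' → ∀ u u' : Fin m → Bool,
      ℙ {ω | H ω w = u ∧ H ω w' = u'} = ((2 : ℝ≥0∞) ^ (2 * m))⁻¹)
    (y G a : ℝ) (hy0 : 0 < y) (hy1 : y < 1) (hG : G = 4 / y ^ 2) (ha : a = (1 - y) * G)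
    (S : Finset (Fin n → Bool)) (hS : G * 2 ^ m ≤ (S.card : ℝ))
    (Z : Ω → ℕ) (hZ : ∀ ω, Z ω = (S.filter (fun w => H ω w = fun _ => false)).card) :
    3 / 4 ≤ ℙ {ω | a ≤ (Z ω : ℝ)} := by
  have hhash : IsPairwiseIndepHash H ℙ :=
    ⟨fun w => (measurable_pi_apply w).comp hH, fun w w' hne u u' => by
      simp [Measure.real, hpair w w' hne u u', pow_mul']⟩
  have hconf : ENNReal.ofReal (1 - 1 / 4) = 3 / 4 := by
    norm_num [ENNReal.ofReal_div_of_pos]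
  simpa only [ha, hZ, hconf] using estimate_yes_general (δ := 1 / 4) hhash (fun _ => false)
    hy0 hy1.le (by norm_num) (by norm_num) (by rw [hG]; field_simp) (by simpa using hS)
end

section
/- Let a ≥ 1 and ε > 0 be real numbers, set g = (√(a+1) − 1)² and G = (√(a+1) + 1)², let q ≥ 1 be a natural number with (1 + ε)^(2q) ≥ 2·G/g, let m be a natural number, and let N be a real number with (g/2)·2^m ≤ N ≤ G·2^m. Then the value v_q := a·2^m/√2 satisfies (1 + ε)^(−q)·N ≤ v_q ≤ (1 + ε)^q·N. Moreover, v_q = √((g/2)·2^m · G·2^m). -/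
/-!
All points of an interval `[L, U]` with `U ≤ E ^ 2 * L` lie within the factor `E` of the geometric
mean `√(L * U)`. Here `L = (g / 2) * 2 ^ m` and `U = G * 2 ^ m`, so that `U / L = 2 * G / g`; and
`g * G = a ^ 2`, a product of squared conjugates, makes the geometric mean equal to
`a * 2 ^ m / √2`.
-/

section GeometricMean

variable {L U E : ℝ}

theorem le_mul_sqrt_mul_of_le_sq_mul (hE : 0 ≤ E) (hU : 0 ≤ U) (h : U ≤ E ^ 2 * L) :
    U ≤ E * √(L * U) :=
  calc U = √(U * U) := (Real.sqrt_mul_self hU).symm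
    _ ≤ √(E ^ 2 * L * U) := by gcongr
    _ = E * √(L * U) := by rw [mul_assoc, Real.sqrt_mul (sq_nonneg E), Real.sqrt_sq hE]

theorem sqrt_mul_le_mul_of_le_sq_mul (hE : 0 ≤ E) (hL : 0 ≤ L) (h : U ≤ E ^ 2 * L) :
    √(L * U) ≤ E * L :=
  calc √(L * U) ≤ √(L * (E ^ 2 * L)) := by gcongr
    _ = √((E * L) ^ 2) := by ring_nf
    _ = E * L := Real.sqrt_sq (mul_nonneg hE hL)

theorem sqrt_mul_approx_of_mem_Icc {N : ℝ} (hE : 0 ≤ E) (hL : 0 ≤ L) (h : U ≤ E ^ 2 * L)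
    (hN : N ∈ Set.Icc L U) : E⁻¹ * N ≤ √(L * U) ∧ √(L * U) ≤ E * N := by
  have hU : 0 ≤ U := hL.trans (hN.1.trans hN.2)
  constructor
  · exact inv_mul_le_of_le_mul₀ hE (Real.sqrt_nonneg _)
      (hN.2.trans (le_mul_sqrt_mul_of_le_sq_mul hE hU h))
  · exact (sqrt_mul_le_mul_of_le_sq_mul hE hL h).trans (mul_le_mul_of_nonneg_left hN.1 hE)

end GeometricMean

theorem sqrt_sub_sq_mul_sqrt_add_sq {x : ℝ} (hx : 0 ≤ x) (y : ℝ) :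
    (√x - y) ^ 2 * (√x + y) ^ 2 = (x - y ^ 2) ^ 2 := by
  rw [← mul_pow, mul_comm, ← sq_sub_sq, Real.sq_sqrt hx]

theorem sqrt_div_mul_mul_mul_of_mul_eq_sq {a g G M : ℝ} (c : ℝ) (ha : 0 ≤ a) (hM : 0 ≤ M)
    (hgG : g * G = a ^ 2) : √((g / c * M) * (G * M)) = a * M / √c :=
  calc √((g / c * M) * (G * M)) = √((a * M) ^ 2 / c) := by rw [mul_pow, ← hgG]; ring_nf
    _ = a * M / √c := by rw [Real.sqrt_div (sq_nonneg _), Real.sqrt_sq (mul_nonneg ha hM)]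

theorem return_value_correct_general {a c E g G M N v : ℝ} (ha : 0 < a) (hc : 0 < c) (hE : 0 ≤ E)
    (hg : g = (√(a + 1) - 1) ^ 2) (hG : G = (√(a + 1) + 1) ^ 2) (hgap : c * G / g ≤ E ^ 2)
    (hM : 0 ≤ M) (hN : N ∈ Set.Icc (g / c * M) (G * M)) (hv : v = a * M / √c) :
    E⁻¹ * N ≤ v ∧ v ≤ E * N ∧ v = √((g / c * M) * (G * M)) := by
  have one_lt_sqrt : 1 < √(a + 1) := Real.lt_sqrt_of_sq_lt (by linarith)
  have g_pos : 0 < g := hg ▸ pow_pos (sub_pos.2 one_lt_sqrt) 2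
  have g_mul_G : g * G = a ^ 2 := by
    rw [hg, hG, sqrt_sub_sq_mul_sqrt_add_sq (by linarith), one_pow, add_sub_cancel_right]
  have v_eq : v = √((g / c * M) * (G * M)) :=
    hv.trans (sqrt_div_mul_mul_mul_of_mul_eq_sq c ha.le hM g_mul_G).symm
  have upper_le : G * M ≤ E ^ 2 * (g / c * M) :=
    calc G * M = c * G / g * (g / c * M) := by field_simp
      _ ≤ E ^ 2 * (g / c * M) := by gcongr
  obtain ⟨lower, upper⟩ := sqrt_mul_approx_of_mem_Icc hE (by positivity) upper_le hN
  exact ⟨v_eq ▸ lower, v_eq ▸ upper, v_eq⟩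

/-- Correctness of the return value of the approximate model counting algorithm:
if `(g/2)·2^m ≤ N ≤ G·2^m` with `g = (√(a+1) − 1)²`, `G = (√(a+1) + 1)²`, and
`(1+ε)^(2q) ≥ 2G/g`, then `v = a·2^m/√2` satisfies
`(1+ε)^(−q)·N ≤ v ≤ (1+ε)^q·N`, and `v` is the geometric mean of the endpoints. -/
theorem return_value_correct (a ε : ℝ) (ha : 1 ≤ a) (hε : 0 < ε)
    (g G : ℝ) (hg : g = (Real.sqrt (a + 1) - 1) ^ 2) (hG : G = (Real.sqrt (a + 1) + 1) ^ 2)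
    (q : ℕ) (hq : 1 ≤ q) (hgap : 2 * G / g ≤ (1 + ε) ^ (2 * q))
    (m : ℕ) (N : ℝ) (hN1 : g / 2 * 2 ^ m ≤ N) (hN2 : N ≤ G * 2 ^ m)
    (v : ℝ) (hv : v = a * 2 ^ m / Real.sqrt 2) :
    ((1 + ε) ^ q)⁻¹ * N ≤ v ∧ v ≤ (1 + ε) ^ q * N ∧
    v = Real.sqrt ((g / 2 * 2 ^ m) * (G * 2 ^ m)) :=
  return_value_correct_general (zero_lt_one.trans_le ha) zero_lt_two (by positivity) hg hG
    (by rwa [← pow_mul']) (by positivity) ⟨hN1, hN2⟩ hv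
end
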